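/- In the setting of the model f(x) = x_1 x_3 + x_2 x_4 with jointly normal dependent inputs as above, the main effect index of x_1 is S_1 = σ_1^2 (μ_3 + μ_4 ρ_{12} σ_2/σ_1)^2 / D, where ρ_{12} = σ_{12}/(σ_1 σ_2) and D = σ_1^2(σ_3^2+μ_3^2) + σ_2^2(σ_4^2+μ_4^2) + 2σ_{12}(σ_{34}+μ_3μ_4). -/

import Mathlib

open MeasureTheory ProbabilityTheory

/-- Random variables all of whose linear combinations are real Gaussians are jointly Gaussian. -/
lemma hasGaussianLaw_pi_of_linearCombination {Ω ι : Type*} [MeasurableSpace Ω] [Fintype ι]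
    {P : Measure Ω} [IsProbabilityMeasure P] {X : ι → Ω → ℝ} (hX : ∀ i, Measurable (X i))
    (h : ∀ c : ι → ℝ, IsGaussian (P.map fun ω => ∑ i, c i * X i ω)) :
    HasGaussianLaw (fun ω i => X i ω) P := by
  classical
  refine ⟨⟨fun L => ?_⟩⟩
  have hmeas : Measurable fun ω i => X i ω := measurable_pi_lambda _ hX
  have hL : (L ∘ fun ω i => X i ω) = fun ω => ∑ i, L (Pi.single i 1) * X i ω := by
    ext ω
    simp only [Function.comp_apply]
    conv_lhs => rw [← LinearMap.sum_single_apply (fun _ => ℝ) (fun i => X i ω)]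
    rw [map_sum]
    refine Finset.sum_congr rfl fun i _ => ?_
    rw [show (Pi.single i (X i ω) : ι → ℝ) = X i ω • Pi.single i 1 by
      rw [← Pi.single_smul]; simp, map_smul, smul_eq_mul, mul_comm]
  have hmap : (P.map fun ω i => X i ω).map L
      = P.map fun ω => ∑ i, L (Pi.single i 1) * X i ω := by
    rw [Measure.map_map (by fun_prop) hmeas, hL]
  have hg : HasGaussianLaw (fun ω => ∑ i, L (Pi.single i 1) * X i ω) P := ⟨h _⟩
  rw [hmap, hg.map_eq_gaussianReal, integral_map hmeas.aemeasurable (by fun_prop),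
    variance_map (by fun_prop) hmeas.aemeasurable, hL]
  simp only [← hL]
  rfl

section Moments

variable {Ω ι : Type*} [MeasurableSpace Ω] [Fintype ι] {P : Measure Ω}
  {X : ι → Ω → ℝ} {m : ι → ℝ} {C : Matrix ι ι ℝ}

lemma integral_linearCombination_of_map_eq_gaussianReal (hX : ∀ i, Measurable (X i))
    (h : ∀ c : ι → ℝ, P.map (fun ω => ∑ i, c i * X i ω)
      = gaussianReal (∑ i, c i * m i) (∑ i, ∑ j, c i * c j * C i j).toNNReal) (c : ι → ℝ) :
    ∫ ω, ∑ i, c i * X i ω ∂P = ∑ i, c i * m i := by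
  have hY : Measurable fun ω => ∑ i, c i * X i ω := by fun_prop
  rw [← integral_id_gaussianReal (μ := ∑ i, c i * m i)
    (v := (∑ i, ∑ j, c i * c j * C i j).toNNReal), ← h c,
    integral_map hY.aemeasurable (by fun_prop)]

lemma variance_linearCombination_of_map_eq_gaussianReal (hX : ∀ i, Measurable (X i))
    (h : ∀ c : ι → ℝ, P.map (fun ω => ∑ i, c i * X i ω)
      = gaussianReal (∑ i, c i * m i) (∑ i, ∑ j, c i * c j * C i j).toNNReal) (c : ι → ℝ) :
    Var[fun ω => ∑ i, c i * X i ω; P] = max (∑ i, ∑ j, c i * c j * C i j) 0 := by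
  have hY : Measurable fun ω => ∑ i, c i * X i ω := by fun_prop
  rw [← Real.coe_toNNReal', ← variance_id_gaussianReal (μ := ∑ i, c i * m i)
    (v := (∑ i, ∑ j, c i * c j * C i j).toNNReal), ← h c,
    variance_map (by fun_prop) hY.aemeasurable]
  rfl

lemma integral_eval_of_map_eq_gaussianReal (hX : ∀ i, Measurable (X i))
    (h : ∀ c : ι → ℝ, P.map (fun ω => ∑ i, c i * X i ω)
      = gaussianReal (∑ i, c i * m i) (∑ i, ∑ j, c i * c j * C i j).toNNReal) (i : ι) :
    ∫ ω, X i ω ∂P = m i := by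
  classical
  simpa [Pi.single_apply] using
    integral_linearCombination_of_map_eq_gaussianReal hX h (Pi.single i 1)

/-- The matrix `C` need not be assumed positive semidefinite: the parallelogram law for the
variance shows that no truncation happens on `X i + X j`. -/
lemma covariance_eval_of_map_eq_gaussianReal [IsProbabilityMeasure P] (hX : ∀ i, Measurable (X i))
    (h : ∀ c : ι → ℝ, P.map (fun ω => ∑ i, c i * X i ω)
      = gaussianReal (∑ i, c i * m i) (∑ i, ∑ j, c i * c j * C i j).toNNReal)
    (hsymm : C.IsSymm) (hdiag : ∀ i, 0 ≤ C i i) (i j : ι) :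
    cov[X i, X j; P] = C i j := by
  classical
  have hlaw := hasGaussianLaw_pi_of_linearCombination hX fun c => by rw [h c]; infer_instance
  have hL (k : ι) : MemLp (X k) 2 P := (hlaw.eval k).memLp_two
  have hvar (k : ι) : Var[X k; P] = C k k := by
    have := variance_linearCombination_of_map_eq_gaussianReal hX h (Pi.single k 1)
    simpa [Pi.single_apply, hdiag k] using this
  have hadd := variance_linearCombination_of_map_eq_gaussianReal hX h
    (Pi.single i 1 + Pi.single j 1)
  have hsub := variance_linearCombination_of_map_eq_gaussianReal hX h
    (Pi.single i 1 - Pi.single j 1)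
  simp only [Pi.add_apply, Pi.sub_apply, Pi.single_apply, add_mul, sub_mul, mul_add, mul_sub,
    Finset.sum_add_distrib, Finset.sum_sub_distrib, ite_mul, mul_ite, one_mul, mul_one, zero_mul,
    mul_zero, Finset.sum_ite_eq', Finset.mem_univ, if_true] at hadd hsub
  rw [variance_fun_add (hL i) (hL j), hvar, hvar, hsymm.apply i j] at hadd
  rw [variance_fun_sub (hL i) (hL j), hvar, hvar, hsymm.apply i j] at hsub
  have := hdiag i
  have := hdiag j
  rcases max_cases (C i i + C i j + (C i j + C j j)) 0 with h1 | h1 <;>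
  rcases max_cases (C i i - C i j - (C i j - C j j)) 0 with h2 | h2 <;>
  grind

end Moments

section Products

variable {Ω : Type*} [MeasurableSpace Ω] {P : Measure Ω}

lemma variance_mul_add_mul_of_indepFun {X Y Z W : Ω → ℝ}
    (hX : MemLp X 2 P) (hY : MemLp Y 2 P) (hZ : MemLp Z 2 P) (hW : MemLp W 2 P)
    (hindep : IndepFun (fun ω => (X ω, Y ω)) (fun ω => (Z ω, W ω)) P)
    (hX0 : ∫ ω, X ω ∂P = 0) (hY0 : ∫ ω, Y ω ∂P = 0) :
    Var[fun ω => X ω * Z ω + Y ω * W ω; P]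
      = (∫ ω, X ω ^ 2 ∂P) * ∫ ω, Z ω ^ 2 ∂P
        + 2 * (∫ ω, X ω * Y ω ∂P) * ∫ ω, Z ω * W ω ∂P
        + (∫ ω, Y ω ^ 2 ∂P) * ∫ ω, W ω ^ 2 ∂P := by
  have hXm := hX.aemeasurable
  have hYm := hY.aemeasurable
  have hZm := hZ.aemeasurable
  have hWm := hW.aemeasurable
  have hprod {g k : ℝ × ℝ → ℝ} (hg : Measurable g) (hk : Measurable k) :
      ∫ ω, g (X ω, Y ω) * k (Z ω, W ω) ∂P
        = (∫ ω, g (X ω, Y ω) ∂P) * ∫ ω, k (Z ω, W ω) ∂P :=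
    hindep.integral_fun_comp_mul_comp (by fun_prop) (by fun_prop)
      hg.aestronglyMeasurable hk.aestronglyMeasurable
  have hint {g k : ℝ × ℝ → ℝ} (hg : Measurable g) (hk : Measurable k)
      (hgi : Integrable (fun ω => g (X ω, Y ω)) P) (hki : Integrable (fun ω => k (Z ω, W ω)) P) :
      Integrable (fun ω => g (X ω, Y ω) * k (Z ω, W ω)) P :=
    (hindep.comp hg hk).integrable_mul hgi hki
  have hXZ : ∫ ω, X ω * Z ω ∂P = 0 := by
    rw [hprod (g := Prod.fst) (k := Prod.fst) measurable_fst measurable_fst, hX0, zero_mul]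
  have hYW : ∫ ω, Y ω * W ω ∂P = 0 := by
    rw [hprod (g := Prod.snd) (k := Prod.snd) measurable_snd measurable_snd, hY0, zero_mul]
  have hmean : ∫ ω, (X ω * Z ω + Y ω * W ω) ∂P = 0 := by
    have hXZi : Integrable (fun ω => X ω * Z ω) P := hX.integrable_mul hZ
    have hYWi : Integrable (fun ω => Y ω * W ω) P := hY.integrable_mul hW
    rw [integral_add hXZi hYWi, hXZ, hYW, add_zero]
  have hXXZZ : Integrable (fun ω => X ω ^ 2 * Z ω ^ 2) P := hint (g := fun p => p.1 ^ 2)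
    (k := fun p => p.1 ^ 2) (by fun_prop) (by fun_prop) hX.integrable_sq hZ.integrable_sq
  have hXYZW : Integrable (fun ω => 2 * (X ω * Y ω * (Z ω * W ω))) P :=
    (hint (g := fun p => p.1 * p.2) (k := fun p => p.1 * p.2) (by fun_prop) (by fun_prop)
      (hX.integrable_mul hY) (hZ.integrable_mul hW)).const_mul 2
  have hYYWW : Integrable (fun ω => Y ω ^ 2 * W ω ^ 2) P := hint (g := fun p => p.2 ^ 2)
    (k := fun p => p.2 ^ 2) (by fun_prop) (by fun_prop) hY.integrable_sq hW.integrable_sq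
  have hexpand (ω : Ω) : (X ω * Z ω + Y ω * W ω) ^ 2
      = X ω ^ 2 * Z ω ^ 2 + 2 * (X ω * Y ω * (Z ω * W ω)) + Y ω ^ 2 * W ω ^ 2 := by ring
  rw [variance_of_integral_eq_zero (by fun_prop) hmean]
  simp_rw [hexpand]
  rw [integral_add (by fun_prop) hYYWW, integral_add hXXZZ hXYZW, integral_const_mul,
    hprod (g := fun p => p.1 ^ 2) (k := fun p => p.1 ^ 2) (by fun_prop) (by fun_prop),
    hprod (g := fun p => p.1 * p.2) (k := fun p => p.1 * p.2) (by fun_prop) (by fun_prop),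
    hprod (g := fun p => p.2 ^ 2) (k := fun p => p.2 ^ 2) (by fun_prop) (by fun_prop)]
  ring

lemma condExp_mul_add_of_indepFun [IsFiniteMeasure P] {X W T : Ω → ℝ}
    (hX : Measurable X) (hW : Measurable W) (hT : Measurable T)
    (hXi : Integrable X P) (hWi : Integrable W P) (hTi : Integrable T P)
    (hXW : IndepFun X W P) (hXT : IndepFun X T P) :
    P[fun ω => X ω * W ω + T ω | MeasurableSpace.comap X inferInstance]
      =ᵐ[P] fun ω => X ω * (∫ ω, W ω ∂P) + ∫ ω, T ω ∂P := by
  have hXWi : Integrable (X * W) P := hXW.integrable_mul hXi hWi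
  have hcond {V : Ω → ℝ} (hV : Measurable V) (hXV : IndepFun X V P) :
      P[V | MeasurableSpace.comap X inferInstance] =ᵐ[P] fun _ => ∫ ω, V ω ∂P :=
    condExp_indep_eq hV.comap_le hX.comap_le (comap_measurable V).stronglyMeasurable
      hXV.symm
  filter_upwards [condExp_add hXWi hTi (MeasurableSpace.comap X inferInstance),
    condExp_mul_of_stronglyMeasurable_left (comap_measurable X).stronglyMeasurable hXWi hWi,
    hcond hW hXW, hcond hT hXT] with ω hadd hmul hWc hTc
  calc _ = _ := hadd
    _ = _ := by rw [Pi.add_apply, hmul, Pi.mul_apply, hWc, hTc]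

end Products

/-- For `f(x) = x₁x₃ + x₂x₄` with `(x₁,x₂,x₃,x₄)` jointly normal of mean `(0,0,μ₃,μ₄)`
and block-diagonal covariance with blocks `[[σ₁²,σ₁₂],[σ₁₂,σ₂²]]` and
`[[σ₃²,σ₃₄],[σ₃₄,σ₄²]]`, the main effect index of `x₁` is
`S₁ = σ₁² (μ₃ + μ₄ ρ₁₂ σ₂/σ₁)² / D` with `ρ₁₂ = σ₁₂/(σ₁σ₂)` and
`D = σ₁²(σ₃²+μ₃²) + σ₂²(σ₄²+μ₄²) + 2σ₁₂(σ₃₄+μ₃μ₄) = Var(f)`. -/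
theorem dependent_gaussian_model_S1
    {Ω : Type*} [MeasurableSpace Ω] (P : Measure Ω) [IsProbabilityMeasure P]
    (X : Fin 4 → Ω → ℝ) (hX : ∀ i, Measurable (X i))
    (μ3 μ4 σ1 σ2 σ3 σ4 σ12 σ34 : ℝ) (hσ1 : σ1 ≠ 0) (hσ2 : σ2 ≠ 0)
    (m : Fin 4 → ℝ) (hm : m = ![0, 0, μ3, μ4])
    (C : Matrix (Fin 4) (Fin 4) ℝ)
    (hC : C = !![σ1 ^ 2, σ12, 0, 0; σ12, σ2 ^ 2, 0, 0;
                 0, 0, σ3 ^ 2, σ34; 0, 0, σ34, σ4 ^ 2])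
    (hgauss : ∀ c : Fin 4 → ℝ,
      Measure.map (fun ω => ∑ i, c i * X i ω) P
        = gaussianReal (∑ i, c i * m i) (∑ i, ∑ j, c i * c j * C i j).toNNReal)
    (f : Ω → ℝ) (hf : f = fun ω => X 0 ω * X 2 ω + X 1 ω * X 3 ω) :
    variance f P
        = σ1 ^ 2 * (σ3 ^ 2 + μ3 ^ 2) + σ2 ^ 2 * (σ4 ^ 2 + μ4 ^ 2)
            + 2 * σ12 * (σ34 + μ3 * μ4) ∧
    variance (P[f | MeasurableSpace.comap (X 0) inferInstance]) P / variance f P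
      = σ1 ^ 2 * (μ3 + μ4 * (σ12 / (σ1 * σ2)) * σ2 / σ1) ^ 2
          / (σ1 ^ 2 * (σ3 ^ 2 + μ3 ^ 2) + σ2 ^ 2 * (σ4 ^ 2 + μ4 ^ 2)
              + 2 * σ12 * (σ34 + μ3 * μ4)) := by
  subst hf
  have hsymm : C.IsSymm := by
    subst hC
    ext i j
    fin_cases i <;> fin_cases j <;> rfl
  have hdiag (i : Fin 4) : 0 ≤ C i i := by
    subst hC
    fin_cases i <;> simp <;> positivity
  have hcov := covariance_eval_of_map_eq_gaussianReal hX hgauss hsymm hdiag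
  have hmean := integral_eval_of_map_eq_gaussianReal hX hgauss
  have hlaw := hasGaussianLaw_pi_of_linearCombination hX fun c => by
    rw [hgauss c]; infer_instance
  have hL (i : Fin 4) : MemLp (X i) 2 P := (hlaw.eval i).memLp_two
  have hmoment (i j : Fin 4) : ∫ ω, X i ω * X j ω ∂P = C i j + m i * m j := by
    have := covariance_eq_sub (hL i) (hL j)
    simp only [hcov, hmean, Pi.mul_apply] at this
    linarith
  have hblocks : IndepFun (fun ω => (X 0 ω, X 1 ω)) (fun ω => (X 2 ω, X 3 ω)) P := by
    have hpair : HasGaussianLaw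
        (fun ω => (fun i => ![X 0, X 1] i ω, fun i => ![X 2, X 3] i ω)) P := by
      convert! hlaw.map_fun
        ((ContinuousLinearMap.pi ![.proj 0, .proj 1]).prod
          (ContinuousLinearMap.pi ![.proj 2, .proj 3])) using 1
      ext ω i <;> fin_cases i <;> rfl
    have hindep := hpair.indepFun_of_covariance_eval fun i j => by
      fin_cases i <;> fin_cases j <;> simp [hcov, hC]
    exact hindep.comp (φ := fun v => (v 0, v 1)) (ψ := fun v => (v 0, v 1))
      (by fun_prop) (by fun_prop)
  have hvar : Var[fun ω => X 0 ω * X 2 ω + X 1 ω * X 3 ω; P]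
      = σ1 ^ 2 * (σ3 ^ 2 + μ3 ^ 2) + σ2 ^ 2 * (σ4 ^ 2 + μ4 ^ 2)
        + 2 * σ12 * (σ34 + μ3 * μ4) := by
    rw [variance_mul_add_mul_of_indepFun (hL 0) (hL 1) (hL 2) (hL 3) hblocks
      (by simp [hmean, hm]) (by simp [hmean, hm])]
    simp only [pow_two, hmoment]
    simp [hC, hm]
    ring
  -- `X 1 - a * X 0` is the residual of the regression of `X 1` on `X 0`.
  set a : ℝ := σ12 / σ1 ^ 2 with ha
  have hresidual : IndepFun (X 0) (fun ω => (X 1 ω - a * X 0 ω, X 2 ω, X 3 ω)) P := by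
    have hpair : HasGaussianLaw (fun ω => (fun i => ![X 0] i ω,
        fun i => ![fun ω => X 1 ω - a * X 0 ω, X 2, X 3] i ω)) P := by
      convert! hlaw.map_fun
        ((ContinuousLinearMap.pi ![.proj 0]).prod
          (ContinuousLinearMap.pi ![.proj 1 - a • .proj 0, .proj 2, .proj 3])) using 1
      ext ω i <;> fin_cases i <;> rfl
    have hcov0 : cov[X 0, fun ω => X 1 ω - a * X 0 ω; P] = 0 := by
      rw [covariance_fun_sub_right (hL 0) (hL 1) ((hL 0).const_mul a),
        covariance_const_mul_right, hcov, hcov, ha, hC]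
      simp [hσ1]
    have hindep := hpair.indepFun_of_covariance_eval fun i j => by
      fin_cases i
      fin_cases j
      · exact hcov0
      · simp [hcov, hC]
      · simp [hcov, hC]
    exact hindep.comp (φ := fun v : Fin 1 → ℝ => v 0) (ψ := fun v : Fin 3 → ℝ => (v 0, v 1, v 2))
      (by fun_prop) (by fun_prop)
  have hLres : MemLp (fun ω => X 1 ω - a * X 0 ω) 2 P := (hL 1).sub ((hL 0).const_mul a)
  have hint (i : Fin 4) : Integrable (X i) P := (hL i).integrable one_le_two
  have hcond := condExp_mul_add_of_indepFun (X := X 0) (W := fun ω => X 2 ω + a * X 3 ω)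
    (T := fun ω => (X 1 ω - a * X 0 ω) * X 3 ω) (hX 0)
    (by fun_prop) (by fun_prop) (hint 0) ((hint 2).add ((hint 3).const_mul a))
    (hLres.integrable_mul (hL 3))
    (hresidual.comp (φ := id) (ψ := fun p : ℝ × ℝ × ℝ => p.2.1 + a * p.2.2) measurable_id
      (by fun_prop))
    (hresidual.comp (φ := id) (ψ := fun p : ℝ × ℝ × ℝ => p.1 * p.2.2) measurable_id (by fun_prop))
  have hW : ∫ ω, (X 2 ω + a * X 3 ω) ∂P = μ3 + a * μ4 := by
    rw [integral_add (hint 2) ((hint 3).const_mul a), integral_const_mul, hmean, hmean, hm]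
    simp
  have hT : ∫ ω, (X 1 ω - a * X 0 ω) * X 3 ω ∂P = 0 := by
    simp_rw [sub_mul, mul_assoc]
    have hint3 (i : Fin 4) : Integrable (fun ω => X i ω * X 3 ω) P := (hL i).integrable_mul (hL 3)
    rw [integral_sub (hint3 1) ((hint3 0).const_mul a), integral_const_mul, hmoment, hmoment, hC, hm]
    simp
  have hdecomp : (fun ω => X 0 ω * (X 2 ω + a * X 3 ω) + (X 1 ω - a * X 0 ω) * X 3 ω)
      = fun ω => X 0 ω * X 2 ω + X 1 ω * X 3 ω := by
    ext ω
    ring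
  rw [hdecomp, hW, hT] at hcond
  refine ⟨hvar, ?_⟩
  have hvar0 : Var[X 0; P] = σ1 ^ 2 := by
    rw [← covariance_self (hX 0).aemeasurable, hcov, hC]
    rfl
  rw [hvar, variance_congr hcond]
  simp only [add_zero]
  rw [variance_mul_const, hvar0, ha]
  congr 1
  field_simp
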